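/- arXiv:1805.10927 — 2 statements merged into one kernel-verified Lean document; each statement's English description precedes it below -/
import Mathlib

section
/- Lemma 1 (sampling size for uniform random node sampling). Let {1,…,N} be partitioned into r clusters C_1,…,C_r with |C_i| = n_i ≥ 1, let n_min = min_i n_i and f = N/n_min. Let I be a uniformly random N'-element subset of {1,…,N} (sampling without replacement), and set n'_i = |I ∩ C_i|. If b is a positive integer and N ≥ N' ≥ 2·f·[b + log(2rN)], then with probability at least 1 − 1/N one has n'_i ≥ b for every i = 1,…,r. -/
open Finset in
lemma aux_choose (N N' : ℕ) (hN : 0 < N) (hup : N' ≤ N) (k : ℕ) (hk : k ≤ N) :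
    ((N - k).choose N' : ℝ) ≤ (N.choose N' : ℝ) * (1 - (N' : ℝ) / N) ^ k := by
  have hNr : (0 : ℝ) < N := by exact_mod_cast hN
  have hq : 0 ≤ 1 - (N' : ℝ) / N := by
    rw [sub_nonneg, div_le_one hNr]; exact_mod_cast hup
  induction k with
  | zero => simp
  | succ k ih =>
    have ih := ih (by omega)
    obtain ⟨M, hM⟩ : ∃ M, N - k = M + 1 := ⟨N - k - 1, by omega⟩
    have h1 : N - (k + 1) = M := by omega
    rw [h1]
    rw [hM] at ih
    have key : (M.choose N' : ℝ) ≤ ((M + 1).choose N' : ℝ) * (1 - (N' : ℝ) / N) := by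
      by_cases h : N' ≤ M
      · have e := Nat.choose_mul_succ_eq M N'
        have e2 : (M.choose N' : ℝ) * (M + 1) = ((M + 1).choose N' : ℝ) * (M + 1 - N') := by
          have := congrArg (Nat.cast : ℕ → ℝ) e
          rw [Nat.cast_mul, Nat.cast_mul, Nat.cast_sub (by omega)] at this
          push_cast at this
          exact this
        have hMp : (0 : ℝ) < (M : ℝ) + 1 := by positivity
        have e3 : (M.choose N' : ℝ) = ((M + 1).choose N' : ℝ) * (1 - (N' : ℝ) / (M + 1)) := by
          field_simp
          linarith
        rw [e3]
        have hMN : (M : ℝ) + 1 ≤ N := by exact_mod_cast (by omega : M + 1 ≤ N)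
        gcongr
      · rw [Nat.choose_eq_zero_of_lt (by omega)]
        simp only [Nat.cast_zero]
        positivity
    calc (M.choose N' : ℝ) ≤ ((M + 1).choose N' : ℝ) * (1 - (N' : ℝ) / N) := key
      _ ≤ ((N.choose N' : ℝ) * (1 - (N' : ℝ) / N) ^ k) * (1 - (N' : ℝ) / N) := by gcongr
      _ = _ := by ring

open Finset in
lemma aux_sum (N N' : ℕ) (hN : 0 < N) (hup : N' ≤ N) (C : Finset (Fin N)) :
    ∑ S ∈ powersetCard N' (univ : Finset (Fin N)), (2 : ℝ) ^ (C \ S).card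
      ≤ (N.choose N' : ℝ) * (2 - (N' : ℝ) / N) ^ C.card := by
  have h1 : ∀ S : Finset (Fin N), (2 : ℝ) ^ (C \ S).card
      = ∑ T ∈ C.powerset, if Disjoint S T then (1 : ℝ) else 0 := by
    intro S
    rw [← sum_filter, sum_const, nsmul_eq_mul, mul_one]
    have : C.powerset.filter (fun T => Disjoint S T) = (C \ S).powerset := by
      ext T
      simp only [mem_filter, mem_powerset, subset_sdiff]
      rw [disjoint_comm]
    rw [this, card_powerset]
    push_cast
    rfl
  have h2 : ∀ T : Finset (Fin N),
      (∑ S ∈ powersetCard N' (univ : Finset (Fin N)), if Disjoint S T then (1 : ℝ) else 0)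
        = ((N - T.card).choose N' : ℝ) := by
    intro T
    rw [← sum_filter, sum_const, nsmul_eq_mul, mul_one]
    have : (powersetCard N' (univ : Finset (Fin N))).filter (fun S => Disjoint S T)
        = powersetCard N' Tᶜ := by
      ext S
      simp only [mem_filter, mem_powersetCard, subset_univ, true_and]
      rw [subset_compl_iff_disjoint_right, and_comm]
    rw [this, card_powersetCard, card_compl, Fintype.card_fin]
  simp_rw [h1]
  rw [sum_comm]
  simp_rw [h2]
  calc ∑ T ∈ C.powerset, ((N - T.card).choose N' : ℝ)
      ≤ ∑ T ∈ C.powerset, (N.choose N' : ℝ) * (1 - (N' : ℝ) / N) ^ T.card := by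
        apply sum_le_sum
        intro T _
        apply aux_choose N N' hN hup
        simpa using card_le_univ T
    _ = (N.choose N' : ℝ) * (2 - (N' : ℝ) / N) ^ C.card := by
        rw [← mul_sum]
        have := sum_pow_mul_eq_add_pow (1 - (N' : ℝ) / N) 1 C
        simp only [one_pow, mul_one] at this
        rw [this]
        congr 2
        ring

open Finset in
lemma aux_tail (N N' b : ℕ) (hN : 0 < N) (hup : N' ≤ N) (C : Finset (Fin N)) (L : ℝ)
    (h : 2 * ((b : ℝ) + L) ≤ (N' : ℝ) / N * C.card) :
    (((powersetCard N' (univ : Finset (Fin N))).filter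
      (fun S => (S ∩ C).card < b)).card : ℝ) ≤ (N.choose N' : ℝ) * Real.exp (-L) := by
  set B := (powersetCard N' (univ : Finset (Fin N))).filter (fun S => (S ∩ C).card < b) with hB
  set q : ℝ := (N' : ℝ) / N with hq
  have hNr : (0 : ℝ) < N := by exact_mod_cast hN
  have hq1 : q ≤ 1 := by
    rw [hq, div_le_one hNr]; exact_mod_cast hup
  have s1 : (B.card : ℝ) * 2 ^ C.card ≤
      2 ^ b * ∑ S ∈ powersetCard N' (univ : Finset (Fin N)), (2 : ℝ) ^ (C \ S).card := by
    calc (B.card : ℝ) * 2 ^ C.card = ∑ S ∈ B, (2 : ℝ) ^ C.card := by simp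
      _ ≤ ∑ S ∈ B, 2 ^ b * (2 : ℝ) ^ (C \ S).card := by
        apply sum_le_sum
        intro S hS
        rw [← pow_add]
        apply pow_le_pow_right₀ (by norm_num)
        have h3 := (mem_filter.mp hS).2
        have h4 := card_sdiff_add_card_inter C S
        rw [inter_comm] at h4
        omega
      _ ≤ ∑ S ∈ powersetCard N' (univ : Finset (Fin N)), 2 ^ b * (2 : ℝ) ^ (C \ S).card := by
        apply sum_le_sum_of_subset_of_nonneg (filter_subset _ _)
        intros; positivity
      _ = _ := by rw [mul_sum]
  have s2 := aux_sum N N' hN hup C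
  have s3 : (2 - q) ^ C.card ≤ 2 ^ C.card * Real.exp (-(q * C.card / 2)) := by
    have : 2 - q ≤ 2 * Real.exp (-(q / 2)) := by
      have := Real.add_one_le_exp (-(q / 2)); linarith
    calc (2 - q) ^ C.card ≤ (2 * Real.exp (-(q / 2))) ^ C.card :=
          pow_le_pow_left₀ (by linarith) this _
      _ = _ := by
        rw [mul_pow, ← Real.exp_nat_mul]; congr 2; ring
  have s4 : (2 : ℝ) ^ b ≤ Real.exp b := by
    have : (2 : ℝ) ≤ Real.exp 1 := by have := Real.add_one_le_exp (1 : ℝ); linarith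
    calc (2 : ℝ) ^ b ≤ (Real.exp 1) ^ b := pow_le_pow_left₀ (by norm_num) this _
      _ = _ := by rw [← Real.exp_nat_mul, mul_one]
  have s5 : Real.exp b * Real.exp (-(q * C.card / 2)) ≤ Real.exp (-L) := by
    rw [← Real.exp_add]; apply Real.exp_le_exp.mpr; linarith
  have h2 : (0 : ℝ) < 2 ^ C.card := by positivity
  refine le_of_mul_le_mul_right ?_ h2
  calc (B.card : ℝ) * 2 ^ C.card
      ≤ 2 ^ b * ((N.choose N' : ℝ) * (2 - q) ^ C.card) := s1.trans (by gcongr)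
    _ ≤ Real.exp b * ((N.choose N' : ℝ) *
          (2 ^ C.card * Real.exp (-(q * C.card / 2)))) := by
        gcongr
        exact mul_nonneg (Nat.cast_nonneg _) (pow_nonneg (by linarith) _)
    _ = (N.choose N' : ℝ) * (Real.exp b * Real.exp (-(q * C.card / 2))) * 2 ^ C.card := by ring
    _ ≤ (N.choose N' : ℝ) * Real.exp (-L) * 2 ^ C.card := by gcongr


open Finset in
/-- **Lemma 1 (sampling size for uniform random node sampling).**
`{1,…,N}` (modeled as `Fin N`) is partitioned into `r` clusters `C 1, …, C r`,
each nonempty, with minimum cluster size `nmin` and balance `f = N / nmin`.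
`I` is a uniformly random `N'`-element subset (sampling without replacement),
so the probability of an event is the fraction of `N'`-element subsets
realizing it.  If `b > 0` and `N ≥ N' ≥ 2 f (b + log (2 r N))`, then with
probability at least `1 - 1/N` every cluster contributes at least `b`
sampled nodes. -/
theorem stmt_0 (N r N' b : ℕ) (hN : 0 < N) (hr : 0 < r) (hN' : 0 < N') (hb : 0 < b)
    (C : Fin r → Finset (Fin N))
    (hdisj : ∀ i j : Fin r, i ≠ j → Disjoint (C i) (C j))
    (hcover : ∀ x : Fin N, ∃ i : Fin r, x ∈ C i)
    (hne : ∀ i : Fin r, (C i).Nonempty)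
    (nmin : ℕ)
    (hnmin_le : ∀ i : Fin r, nmin ≤ (C i).card)
    (hnmin_mem : ∃ i : Fin r, (C i).card = nmin)
    (hup : N' ≤ N)
    (hlow : 2 * ((N : ℝ) / (nmin : ℝ)) * ((b : ℝ) + Real.log (2 * r * N)) ≤ (N' : ℝ)) :
    1 - 1 / (N : ℝ) ≤
      (((powersetCard N' (univ : Finset (Fin N))).filter
          (fun S => ∀ i : Fin r, b ≤ (S ∩ C i).card)).card : ℝ) /
        ((powersetCard N' (univ : Finset (Fin N))).card : ℝ) := by

  have hNr : (0 : ℝ) < N := by exact_mod_cast hN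
  have hrr : (0 : ℝ) < r := by exact_mod_cast hr
  have hm : 0 < nmin := by
    obtain ⟨i, hi⟩ := hnmin_mem
    rw [← hi]; exact (hne i).card_pos
  have hmr : (0 : ℝ) < nmin := by exact_mod_cast hm
  set P := powersetCard N' (univ : Finset (Fin N)) with hP
  have hPc : P.card = N.choose N' := by simp [hP]
  have hPpos : (0 : ℝ) < P.card := by
    rw [hPc]; exact_mod_cast Nat.choose_pos hup
  have tail : ∀ i : Fin r, ((P.filter (fun S => (S ∩ C i).card < b)).card : ℝ)
      ≤ (P.card : ℝ) * (1 / (2 * r * N)) := by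
    intro i
    have := aux_tail N N' b hN hup (C i) (Real.log (2 * r * N)) (by
      have hc : (nmin : ℝ) ≤ (C i).card := by exact_mod_cast hnmin_le i
      have e : 2 * ((b : ℝ) + Real.log (2 * r * N)) ≤ (N' : ℝ) / N * nmin := by
        have := mul_le_mul_of_nonneg_right hlow (by positivity : (0 : ℝ) ≤ nmin / N)
        calc 2 * ((b : ℝ) + Real.log (2 * r * N))
            = 2 * ((N : ℝ) / (nmin : ℝ)) * ((b : ℝ) + Real.log (2 * r * N)) * (nmin / N) := by
              field_simp
          _ ≤ _ := this
          _ = _ := by ring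
      exact e.trans (by gcongr))
    rw [Real.exp_neg, Real.exp_log (by positivity), ← hPc, ← one_div] at this
    exact this
  have hbad : ((P.filter (fun S => ¬ ∀ i : Fin r, b ≤ (S ∩ C i).card)).card : ℝ)
      ≤ (P.card : ℝ) * (1 / N) := by
    have hsub : P.filter (fun S => ¬ ∀ i : Fin r, b ≤ (S ∩ C i).card)
        ⊆ (univ : Finset (Fin r)).biUnion (fun i => P.filter (fun S => (S ∩ C i).card < b)) := by
      intro S hS
      rw [mem_filter] at hS
      obtain ⟨hS1, hS2⟩ := hS
      push Not at hS2
      obtain ⟨i, hi⟩ := hS2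
      exact mem_biUnion.mpr ⟨i, mem_univ i, mem_filter.mpr ⟨hS1, hi⟩⟩
    have hle := (card_le_card hsub).trans card_biUnion_le
    have hle' : ((P.filter (fun S => ¬ ∀ i : Fin r, b ≤ (S ∩ C i).card)).card : ℝ)
        ≤ ∑ i : Fin r, ((P.filter (fun S => (S ∩ C i).card < b)).card : ℝ) := by
      exact_mod_cast hle
    calc _ ≤ _ := hle'
      _ ≤ ∑ i : Fin r, (P.card : ℝ) * (1 / (2 * r * N)) := sum_le_sum (fun i _ => tail i)
      _ = (P.card : ℝ) * (1 / N) * (1 / 2) := by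
        simp only [sum_const, card_univ, Fintype.card_fin, nsmul_eq_mul]
        field_simp
      _ ≤ (P.card : ℝ) * (1 / N) := by
        have : 0 ≤ (P.card : ℝ) * (1 / N) := by positivity
        linarith
  have hsum := card_filter_add_card_filter_not (s := P) (fun S => ∀ i : Fin r, b ≤ (S ∩ C i).card)
  have hsum' : ((P.filter (fun S => ∀ i : Fin r, b ≤ (S ∩ C i).card)).card : ℝ) +
      ((P.filter (fun S => ¬ ∀ i : Fin r, b ≤ (S ∩ C i).card)).card : ℝ) = P.card := by
    exact_mod_cast hsum
  rw [le_div_iff₀ hPpos]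
  linarith
end

section
/- Deterministic lower bound on SbS column sampling probabilities (Appendix Lemma, 'SbS column sampling probabilities'). Let {1,…,N} be partitioned into clusters C_1,…,C_r with |C_i| = n_i ≥ 1, let 0 ≤ q ≤ p ≤ 1 with p > 0 and 0 < ρ ≤ 1, and set μ_i = ρ·[(p−q)·n_i + q·N] and η_i = 1 + (q/p)·(N/n_i − 1). Let d_1,…,d_N be real numbers and α ∈ (0,1) such that |d_j − μ_i| ≤ α·μ_i for every i and every j ∈ C_i. Define s(j) = d_j^{−1} / Σ_{k=1}^N d_k^{−1}. Then for every i and every j ∈ C_i, s(j) ≥ ((1−α)/(1+α)) · 1/(r·n_i·η_i). -/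
open Finset in
/-- **Deterministic lower bound on SbS column sampling probabilities.**
`Fin N` is partitioned into `r` nonempty clusters `C i` of sizes `nᵢ`,
`0 ≤ q ≤ p ≤ 1`, `p > 0`, `0 < ρ ≤ 1`, `μᵢ = ρ ((p-q) nᵢ + q N)` and
`ηᵢ = 1 + (q/p)(N/nᵢ - 1)`.  If the (degree) numbers `d j` satisfy
`|d j - μᵢ| ≤ α μᵢ` for every `i` and `j ∈ C i`, with `α ∈ (0,1)`, then the
SbS sampling probability `s j = (d j)⁻¹ / ∑ₖ (d k)⁻¹` satisfies
`s j ≥ ((1-α)/(1+α)) / (r nᵢ ηᵢ)` for every `i` and `j ∈ C i`. -/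
theorem stmt_9 (N r : ℕ) (hN : 0 < N) (hr : 0 < r)
    (C : Fin r → Finset (Fin N))
    (hdisj : ∀ i i' : Fin r, i ≠ i' → Disjoint (C i) (C i'))
    (hcover : ∀ x : Fin N, ∃ i : Fin r, x ∈ C i)
    (hne : ∀ i : Fin r, (C i).Nonempty)
    (p q ρ : ℝ) (hq0 : 0 ≤ q) (hqp : q ≤ p) (hp0 : 0 < p) (hp1 : p ≤ 1)
    (hρ0 : 0 < ρ) (hρ1 : ρ ≤ 1)
    (μ η : Fin r → ℝ)
    (hμ : ∀ i : Fin r, μ i = ρ * ((p - q) * ((C i).card : ℝ) + q * N))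
    (hη : ∀ i : Fin r, η i = 1 + q / p * ((N : ℝ) / ((C i).card : ℝ) - 1))
    (d : Fin N → ℝ) (α : ℝ) (hα0 : 0 < α) (hα1 : α < 1)
    (htyp : ∀ i : Fin r, ∀ j ∈ C i, |d j - μ i| ≤ α * μ i) :
    ∀ i : Fin r, ∀ j ∈ C i,
      (1 - α) / (1 + α) * (1 / ((r : ℝ) * ((C i).card : ℝ) * η i)) ≤
        (d j)⁻¹ / ∑ k : Fin N, (d k)⁻¹ := by
  have hn : ∀ i, (0 : ℝ) < ((C i).card : ℝ) := fun i => by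
    exact_mod_cast (hne i).card_pos
  have hnN : ∀ i, ((C i).card : ℝ) ≤ N := fun i => by
    have h := Finset.card_le_univ (C i)
    rw [Fintype.card_fin] at h
    exact_mod_cast h
  have hμη : ∀ i, μ i = ρ * p * (((C i).card : ℝ) * η i) := fun i => by
    have := (hn i).ne'
    rw [hμ, hη]
    field_simp
    ring
  have hμlb : ∀ i, ρ * p * ((C i).card : ℝ) ≤ μ i := fun i => by
    rw [hμ, mul_assoc]
    apply mul_le_mul_of_nonneg_left _ hρ0.le
    nlinarith [mul_le_mul_of_nonneg_left (hnN i) hq0]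
  have hρp : 0 < ρ * p := mul_pos hρ0 hp0
  have hμpos : ∀ i, 0 < μ i := fun i => lt_of_lt_of_le (mul_pos hρp (hn i)) (hμlb i)
  have h1α : 0 < 1 - α := by linarith
  have h1α' : 0 < 1 + α := by linarith
  have hlo : ∀ i, ∀ j ∈ C i, (1 - α) * μ i ≤ d j := fun i j hj => by
    have := (abs_le.mp (htyp i j hj)).1
    linarith
  have hhi : ∀ i, ∀ j ∈ C i, d j ≤ (1 + α) * μ i := fun i j hj => by
    have := (abs_le.mp (htyp i j hj)).2
    linarith
  have hdpos : ∀ j, 0 < d j := fun j => by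
    obtain ⟨i, hi⟩ := hcover j
    exact lt_of_lt_of_le (mul_pos h1α (hμpos i)) (hlo i j hi)
  have hr' : (0 : ℝ) < r := by exact_mod_cast hr
  have hsum : ∑ k : Fin N, (d k)⁻¹ ≤ r / ((1 - α) * (ρ * p)) := by
    have hU : (Finset.univ : Finset (Fin N)) = Finset.univ.biUnion C := by
      ext x
      simpa using hcover x
    rw [hU, Finset.sum_biUnion (fun i _ i' _ h => hdisj i i' h)]
    calc ∑ i, ∑ k ∈ C i, (d k)⁻¹ ≤ ∑ i : Fin r, 1 / ((1 - α) * (ρ * p)) := by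
          apply Finset.sum_le_sum
          intro i _
          have h : ∀ k ∈ C i, (d k)⁻¹ ≤ ((1 - α) * (ρ * p * ((C i).card : ℝ)))⁻¹ := by
            intro k hk
            apply inv_anti₀ (mul_pos h1α (mul_pos hρp (hn i)))
            exact (mul_le_mul_of_nonneg_left (hμlb i) h1α.le).trans (hlo i k hk)
          refine (Finset.sum_le_card_nsmul _ _ _ h).trans (le_of_eq ?_)
          have := (hn i).ne'
          rw [nsmul_eq_mul]
          field_simp
      _ = _ := by
          simp [div_eq_mul_inv]
  have hspos : 0 < ∑ k : Fin N, (d k)⁻¹ :=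
    Finset.sum_pos (fun k _ => inv_pos.mpr (hdpos k)) ⟨⟨0, hN⟩, Finset.mem_univ _⟩
  intro i j hj
  have hX : 0 < ((C i).card : ℝ) * η i := by
    have h := hμpos i
    rw [hμη] at h
    exact (mul_pos_iff_of_pos_left hρp).mp h
  calc (1 - α) / (1 + α) * (1 / ((r : ℝ) * ((C i).card : ℝ) * η i))
      = ((1 + α) * μ i)⁻¹ / (r / ((1 - α) * (ρ * p))) := by
        rw [hμη, mul_assoc (r : ℝ)]
        generalize ((C i).card : ℝ) * η i = X at hX
        field_simp
    _ ≤ _ := div_le_div₀ (inv_pos.mpr (hdpos j)).le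
        (inv_anti₀ (hdpos j) (hhi i j hj)) hspos hsum
end
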